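/- Suppose each A_i(t) is upper triangular and the Liao-type exponent satisfies χ < 0 for some Δ-sequence {n_s}. Then there exists a constant δ > 0 such that, whenever the perturbations satisfy ‖F_i(t,x)‖ ≤ L‖x‖ for all i ∈ I, t > 0, x ∈ ℝ^d with 0 ≤ L < δ, every solution x(t) of the switched quasi-linear system ẋ(t) = A_{u(t)}(t)x(t) + F_{u(t)}(t,x(t)) satisfies limsup_{t→∞} (1/t)·log‖x(t)‖ < 0; i.e., the system is globally asymptotically exponentially stable. -/

import Mathlib

/-- Matrix acting on `EuclideanSpace ℝ (Fin d)` by matrix-vector multiplication. -/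
noncomputable def mulVecE {d : ℕ} (M : Matrix (Fin d) (Fin d) ℝ)
    (v : EuclideanSpace ℝ (Fin d)) : EuclideanSpace ℝ (Fin d) :=
  (EuclideanSpace.equiv (Fin d) ℝ).symm (M.mulVec (EuclideanSpace.equiv (Fin d) ℝ v))

/-!
On a window `[T k, T (k + 1)]` pass to the coordinates `R ^ j * exp (-∫ M_jj) * x_j`, the integral
running from `T k`. This removes the diagonal of the system and, the system being triangular, leaves
off-diagonal entries of size `O(1 / R)`; a perturbation of growth `L` becomes one of size
`O(R ^ d * L)`. By Grönwall's inequality the rescaled trajectory grows at most at a rate `κ`, which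
is small if `R` is chosen large first and `L` small afterwards. Removing the exponential weights at
the end of the window costs a factor `exp (max_j ∫ M_jj)`, and nothing has to be paid for the
weights `R ^ j`, which are the same on all windows. The product over the windows therefore grows at
an exponential rate of at most `χ + κ`, where `χ < 0` is the Liao-type exponent. The windows have
bounded length, which makes the bounds uniform and lets them pass to times inside a window.
-/

section

open Filter MeasureTheory Set Topology

section OffCountable

variable {a b : ℝ} {S : Set ℝ}

lemma exists_mem_Ioo_eq_and_forall_Ioc_lt {X Y : Type*} [ConditionallyCompleteLinearOrder X]
    [DenselyOrdered X] [TopologicalSpace X] [OrderTopology X] [LinearOrder Y] [TopologicalSpace Y]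
    [OrderClosedTopology Y] {f : X → Y} {a b : X} {y : Y} (hab : a ≤ b)
    (hf : ContinuousOn f (Icc a b)) (hay : f a < y) (hyb : y < f b) :
    ∃ c ∈ Ioo a b, f c = y ∧ ∀ t ∈ Ioc c b, y < f t := by
  have hcompact : IsCompact (Icc a b ∩ f ⁻¹' {y}) :=
    isCompact_Icc.of_isClosed_subset (hf.preimage_isClosed_of_isClosed isClosed_Icc
      isClosed_singleton) inter_subset_left
  obtain ⟨c, ⟨hcab, hcy⟩, hmax⟩ := hcompact.exists_isGreatest
    (intermediate_value_Icc hab hf ⟨hay.le, hyb.le⟩)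
  refine ⟨c, ⟨hcab.1.lt_of_ne ?_, hcab.2.lt_of_ne ?_⟩, hcy, fun t ht => ?_⟩
  · rintro rfl
    exact hay.ne hcy
  · rintro rfl
    exact hyb.ne' hcy
  · by_contra! hty
    obtain ⟨s, hs, hsy⟩ := intermediate_value_Icc ht.2
      (hf.mono (Icc_subset_Icc_left (hcab.1.trans ht.1.le))) ⟨hty, hyb.le⟩
    exact (ht.1.trans_le hs.1).not_ge (hmax ⟨⟨hcab.1.trans (ht.1.le.trans hs.1), hs.2⟩, hsy⟩)

lemma image_le_image_of_hasDerivAt_nonpos_off_countable {f : ℝ → ℝ} (hS : S.Countable)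
    (hab : a ≤ b) (hfc : ContinuousOn f (Icc a b))
    (hfd : ∀ t ∈ Ioo a b, t ∉ S → ∃ f' ≤ 0, HasDerivAt f f' t) : f b ≤ f a := by
  by_contra! hlt
  obtain ⟨ε, hε, hεlt⟩ : ∃ ε > 0, (b - a) * ε < f b - f a :=
    exists_pos_mul_lt (sub_pos.2 hlt) _
  let g : ℝ → ℝ := fun t => f t - ε * t
  -- `g` crosses some level outside the countable set `g '' S` for the last time at a point where
  -- it is strictly decreasing, and yet it stays above that level afterwards.
  obtain ⟨y, hyS, hay, hyb⟩ : ∃ y ∉ g '' S, y ∈ Ioo (g a) (g b) :=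
    ((hS.image g).dense_compl ℝ).exists_mem_open isOpen_Ioo
      (nonempty_Ioo.2 (by simp only [g]; linarith))
  obtain ⟨c, hc, hcy, habove⟩ := exists_mem_Ioo_eq_and_forall_Ioc_lt (f := g) hab
    (hfc.sub (by fun_prop)) hay hyb
  obtain ⟨f', hf', hf⟩ := hfd c hc fun hcS => hyS ⟨c, hcS, hcy⟩
  have hg : HasDerivAt g (f' - ε) c := by
    simpa only [mul_one, id_eq] using hf.fun_sub ((hasDerivAt_id c).const_mul ε)
  have hslope : ∀ᶠ t in 𝓝[>] c, slope g c t < 0 :=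
    ((hasDerivWithinAt_iff_tendsto_slope' self_notMem_Ioi).1
      hg.hasDerivWithinAt).eventually_lt_const (by linarith)
  obtain ⟨t, htneg, ht⟩ := (hslope.and (Ioc_mem_nhdsGT hc.2)).exists
  have hgt : g c < g t := hcy.trans_lt (habove t ht)
  rw [slope_def_field] at htneg
  exact htneg.not_ge (div_nonneg (sub_nonneg.2 hgt.le) (sub_nonneg.2 ht.1.le))

variable {E : Type*} [NormedAddCommGroup E] [InnerProductSpace ℝ E] {x : ℝ → E} {κ : ℝ}

lemma norm_le_exp_mul_norm_of_norm_deriv_le_off_countable (hS : S.Countable) (hab : a ≤ b)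
    (hxc : ContinuousOn x (Icc a b))
    (hxd : ∀ t ∈ Ioo a b, t ∉ S → ∃ x', HasDerivAt x x' t ∧ ‖x'‖ ≤ κ * ‖x t‖) :
    ‖x b‖ ≤ Real.exp (κ * (b - a)) * ‖x a‖ := by
  have hle := image_le_image_of_hasDerivAt_nonpos_off_countable
    (f := fun t => (Real.exp (κ * (b - t))) ^ 2 * ‖x t‖ ^ 2) hS hab
    ((Continuous.continuousOn (by fun_prop)).mul (hxc.norm.pow 2)) fun t ht htS => by
      obtain ⟨x', hx', hle⟩ := hxd t ht htS
      have hexp : HasDerivAt (fun t => Real.exp (κ * (b - t)))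
          (Real.exp (κ * (b - t)) * (κ * -1)) t :=
        (((hasDerivAt_id t).const_sub b).const_mul κ).exp
      refine ⟨_, ?_, (hexp.pow 2).mul hx'.norm_sq⟩
      have hinner : inner ℝ (x t) x' ≤ κ * ‖x t‖ ^ 2 :=
        (real_inner_le_norm _ _).trans (by nlinarith [norm_nonneg (x t)])
      have := mul_le_mul_of_nonneg_left hinner (sq_nonneg (Real.exp (κ * (b - t))))
      simp only [Pi.pow_apply]
      push_cast
      linarith
  simp only [sub_self, mul_zero, Real.exp_zero, one_pow, one_mul, ← mul_pow] at hle
  exact abs_le_of_sq_le_sq' hle (by positivity) |>.2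

lemma exp_neg_mul_norm_le_norm_of_norm_deriv_le_off_countable (hS : S.Countable) (hab : a ≤ b)
    (hxc : ContinuousOn x (Icc a b))
    (hxd : ∀ t ∈ Ioo a b, t ∉ S → ∃ x', HasDerivAt x x' t ∧ ‖x'‖ ≤ κ * ‖x t‖) :
    Real.exp (-(κ * (b - a))) * ‖x a‖ ≤ ‖x b‖ := by
  have hrev := norm_le_exp_mul_norm_of_norm_deriv_le_off_countable (κ := κ)
    (x := fun t => x (a + b - t)) (hS.preimage (sub_right_injective (b := a + b))) hab
    (hxc.comp (by fun_prop) fun t ht => ⟨by linarith [ht.2], by linarith [ht.1]⟩)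
    fun t ht htS => by
      obtain ⟨x', hx', hle⟩ := hxd (a + b - t) ⟨by linarith [ht.2], by linarith [ht.1]⟩ htS
      exact ⟨-x', hx'.comp_const_sub _ _, by rwa [norm_neg]⟩
  rw [Real.exp_neg, inv_mul_le_iff₀ (Real.exp_pos _)]
  simpa using hrev

end OffCountable

section Primitive

variable {E : Type*} [NormedAddCommGroup E] {f : ℝ → E} {S U : Set ℝ} {a b C t : ℝ}

lemma aestronglyMeasurable_of_continuousAt_off_countable {μ : Measure ℝ} [NullSingletonClass μ]
    (hS : S.Countable) (hU : MeasurableSet U) (hf : ∀ t ∈ U, t ∉ S → ContinuousAt f t) :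
    AEStronglyMeasurable f (μ.restrict U) := by
  rw [← Measure.restrict_congr_set (sdiff_null_ae_eq_self (hS.measure_zero μ))]
  exact ContinuousOn.aestronglyMeasurable
    (fun t ht => (hf t ht.1 ht.2).continuousWithinAt) (hU.diff hS.measurableSet)

lemma intervalIntegrable_of_continuousAt_off_countable (hS : S.Countable)
    (hfc : ∀ t > a, t ∉ S → ContinuousAt f t) (hfb : ∀ t > a, ‖f t‖ ≤ C) (hab : a ≤ b) :
    IntervalIntegrable f volume a b := by
  rw [intervalIntegrable_iff_integrableOn_Ioc_of_le hab]
  refine IntegrableOn.of_bound measure_Ioc_lt_top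
    (aestronglyMeasurable_of_continuousAt_off_countable hS measurableSet_Ioc
      fun t ht => hfc t ht.1) C ?_
  filter_upwards [ae_restrict_mem measurableSet_Ioc] with t ht using hfb t ht.1

lemma hasDerivAt_integral_of_continuousAt_off_countable [NormedSpace ℝ E] [CompleteSpace E]
    (hS : S.Countable) (hfc : ∀ t > a, t ∉ S → ContinuousAt f t) (hfb : ∀ t > a, ‖f t‖ ≤ C)
    (hat : a < t) (htS : t ∉ S) : HasDerivAt (fun s => ∫ r in a..s, f r) (f t) t :=
  intervalIntegral.integral_hasDerivAt_right
    (intervalIntegrable_of_continuousAt_off_countable hS hfc hfb hat.le)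
    ⟨Ioi a, Ioi_mem_nhds hat,
      aestronglyMeasurable_of_continuousAt_off_countable hS measurableSet_Ioi hfc⟩
    (hfc t hat htS)

end Primitive

section Matrix

variable {d : ℕ} {M : Matrix (Fin d) (Fin d) ℝ}

lemma mulVecE_apply (M : Matrix (Fin d) (Fin d) ℝ) (v : EuclideanSpace ℝ (Fin d)) (j : Fin d) :
    mulVecE M v j = ∑ k, M j k * v k := rfl

lemma norm_le_mul_norm_of_forall_abs_le {ι : Type*} [Fintype ι] {v w : EuclideanSpace ℝ ι} {c : ℝ}
    (hc : 0 ≤ c) (h : ∀ j, |v j| ≤ c * |w j|) : ‖v‖ ≤ c * ‖w‖ := by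
  refine abs_le_of_sq_le_sq' ?_ (by positivity) |>.2
  rw [mul_pow, EuclideanSpace.real_norm_sq_eq, EuclideanSpace.real_norm_sq_eq, Finset.mul_sum]
  refine Finset.sum_le_sum fun j _ => ?_
  rw [← mul_pow, sq_le_sq, abs_mul, abs_of_nonneg hc]
  exact h j

lemma norm_mulVecE_le_of_forall_abs_le {β : ℝ} (hβ : 0 ≤ β) (h : ∀ j k, |M j k| ≤ β)
    (v : EuclideanSpace ℝ (Fin d)) : ‖mulVecE M v‖ ≤ d * β * ‖v‖ := by
  refine abs_le_of_sq_le_sq' ?_ (by positivity) |>.2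
  have hrow : ∀ j, (mulVecE M v j) ^ 2 ≤ d * β ^ 2 * ‖v‖ ^ 2 := fun j =>
    calc (∑ k, M j k * v k) ^ 2 ≤ (∑ k, M j k ^ 2) * ∑ k, v k ^ 2 :=
          Finset.sum_mul_sq_le_sq_mul_sq _ _ _
      _ ≤ (∑ _k : Fin d, β ^ 2) * ∑ k, v k ^ 2 := by
          gcongr ?_ * _
          exact Finset.sum_le_sum fun k _ => sq_le_sq.2 ((h j k).trans (le_abs_self β))
      _ = d * β ^ 2 * ‖v‖ ^ 2 := by simp [EuclideanSpace.real_norm_sq_eq]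
  calc ‖mulVecE M v‖ ^ 2 = ∑ j, (mulVecE M v j) ^ 2 := EuclideanSpace.real_norm_sq_eq _
    _ ≤ ∑ _j : Fin d, d * β ^ 2 * ‖v‖ ^ 2 := Finset.sum_le_sum fun j _ => hrow j
    _ = (d * β * ‖v‖) ^ 2 := by
        rw [Finset.sum_const, Finset.card_univ, Fintype.card_fin, nsmul_eq_mul]
        ring

lemma abs_apply_le_of_norm_mulVecE_le {α : ℝ}
    (h : ∀ v : EuclideanSpace ℝ (Fin d), ‖mulVecE M v‖ ≤ α * ‖v‖) (j k : Fin d) :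
    |M j k| ≤ α := by
  have hcol := (PiLp.norm_apply_le (mulVecE M (EuclideanSpace.single k 1)) j).trans (h _)
  simpa [mulVecE_apply, Pi.single_apply] using hcol

lemma sub_mulVecE_diagonal_eq (M : Matrix (Fin d) (Fin d) ℝ) (v y : EuclideanSpace ℝ (Fin d)) :
    y - mulVecE (Matrix.diagonal M.diag) v =
      mulVecE (M - Matrix.diagonal M.diag) v + (y - mulVecE M v) := by
  ext j
  simp only [PiLp.sub_apply, PiLp.add_apply, mulVecE_apply, Matrix.sub_apply, sub_mul,
    Finset.sum_sub_distrib]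
  ring

end Matrix

section Rescale

variable {d : ℕ} {R : ℝ} {p q : Fin d → ℝ} {v : EuclideanSpace ℝ (Fin d)}

/-- Liao's rescaled coordinates `R ^ j * exp (-p j) * v j`: for a triangular system the powers of a
large `R` make the off-diagonal entries small, and taking for `p` a primitive of the diagonal
entries removes the diagonal. -/
noncomputable def rescale (R : ℝ) (p : Fin d → ℝ) (v : EuclideanSpace ℝ (Fin d)) :
    EuclideanSpace ℝ (Fin d) :=
  WithLp.toLp 2 fun j => R ^ (j : ℕ) * Real.exp (-p j) * v j

lemma rescale_apply (R : ℝ) (p : Fin d → ℝ) (v : EuclideanSpace ℝ (Fin d)) (j : Fin d) :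
    rescale R p v j = R ^ (j : ℕ) * Real.exp (-p j) * v j := rfl

lemma rescale_add (R : ℝ) (p : Fin d → ℝ) (v w : EuclideanSpace ℝ (Fin d)) :
    rescale R p (v + w) = rescale R p v + rescale R p w := by
  ext j
  simp only [rescale_apply, PiLp.add_apply, mul_add]

lemma norm_rescale_le_exp_mul_norm_rescale {s : ℝ} (h : ∀ j, p j ≤ q j + s) :
    ‖rescale R q v‖ ≤ Real.exp s * ‖rescale R p v‖ := by
  refine norm_le_mul_norm_of_forall_abs_le (Real.exp_pos s).le fun j => ?_
  have hexp : Real.exp (-q j) ≤ Real.exp s * Real.exp (-p j) := by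
    rw [← Real.exp_add]
    exact Real.exp_le_exp.2 (by linarith [h j])
  simp only [rescale_apply, abs_mul, Real.abs_exp]
  calc |R ^ (j : ℕ)| * Real.exp (-q j) * |v j|
      ≤ |R ^ (j : ℕ)| * (Real.exp s * Real.exp (-p j)) * |v j| := by gcongr
    _ = Real.exp s * (|R ^ (j : ℕ)| * Real.exp (-p j) * |v j|) := by ring

lemma norm_le_norm_rescale_zero (hR : 1 ≤ R) : ‖v‖ ≤ ‖rescale R 0 v‖ := by
  rw [← one_mul ‖rescale R 0 v‖]
  refine norm_le_mul_norm_of_forall_abs_le zero_le_one fun j => ?_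
  simpa [rescale_apply, abs_mul] using
    le_mul_of_one_le_left (abs_nonneg (v j)) (one_le_pow₀ (hR.trans (le_abs_self R)))

lemma norm_rescale_zero_le (hR : 1 ≤ R) : ‖rescale R 0 v‖ ≤ R ^ d * ‖v‖ := by
  refine norm_le_mul_norm_of_forall_abs_le (by positivity) fun j => ?_
  have hpow : R ^ (j : ℕ) ≤ R ^ d := pow_le_pow_right₀ hR j.2.le
  simp only [rescale_apply, Pi.zero_apply, neg_zero, Real.exp_zero, mul_one, abs_mul, abs_pow,
    abs_of_pos (one_pos.trans_le hR)]
  gcongr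

lemma hasDerivAt_rescale {p : Fin d → ℝ → ℝ} {p' : Fin d → ℝ}
    {x : ℝ → EuclideanSpace ℝ (Fin d)} {x' : EuclideanSpace ℝ (Fin d)} {t : ℝ}
    (hp : ∀ j, HasDerivAt (p j) (p' j) t) (hx : HasDerivAt x x' t) :
    HasDerivAt (fun t => rescale R (fun j => p j t) (x t))
      (rescale R (fun j => p j t) (x' - mulVecE (Matrix.diagonal p') (x t))) t := by
  have hcoord : ∀ j : Fin d, HasDerivAt (fun t => R ^ (j : ℕ) * Real.exp (-p j t) * x t j)
      (rescale R (fun j => p j t) (x' - mulVecE (Matrix.diagonal p') (x t)) j) t := by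
    intro j
    have hxj : HasDerivAt (fun t => x t j) (x' j) t :=
      (EuclideanSpace.proj (𝕜 := ℝ) j).hasFDerivAt.comp_hasDerivAt t hx
    refine ((((hp j).fun_neg.exp).const_mul (R ^ (j : ℕ))).fun_mul hxj).congr_deriv ?_
    simp only [rescale_apply, PiLp.sub_apply, mulVecE_apply, Matrix.diagonal_apply, ite_mul,
      zero_mul, Finset.sum_ite_eq, Finset.mem_univ, if_true]
    ring
  exact (PiLp.hasFDerivAt_toLp 2 _).comp_hasDerivAt t (hasDerivAt_pi.2 hcoord)

/-- An off-diagonal entry above the diagonal is multiplied by `R ^ (j - k) ≤ R⁻¹` on passing to the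
rescaled coordinates. -/
lemma norm_rescale_mulVecE_le {N : Matrix (Fin d) (Fin d) ℝ} {α c : ℝ} (hR : 1 ≤ R)
    (hα : 0 ≤ α) (hp : ∀ j, |p j| ≤ c) (hN : ∀ j k, k ≤ j → N j k = 0)
    (hNα : ∀ j k, |N j k| ≤ α) :
    ‖rescale R p (mulVecE N v)‖ ≤ d * (Real.exp (2 * c) * (α / R)) * ‖rescale R p v‖ := by
  have hR0 : 0 < R := one_pos.trans_le hR
  let B : Matrix (Fin d) (Fin d) ℝ := Matrix.of fun j k =>
    Real.exp (p k - p j) * (N j k * R ^ (j : ℕ) / R ^ (k : ℕ))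
  have hconj : rescale R p (mulVecE N v) = mulVecE B (rescale R p v) := by
    ext j
    simp only [rescale_apply, mulVecE_apply, Finset.mul_sum, B, Matrix.of_apply]
    refine Finset.sum_congr rfl fun k _ => ?_
    rw [sub_eq_add_neg, Real.exp_add, Real.exp_neg (p k)]
    field_simp
  rw [hconj]
  refine norm_mulVecE_le_of_forall_abs_le (by positivity) (fun j k => ?_) _
  simp only [B, Matrix.of_apply, abs_mul, Real.abs_exp]
  have hexp : p k - p j ≤ 2 * c := by
    linarith [le_of_abs_le (hp k), neg_le_of_abs_le (hp j)]
  gcongr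
  rcases le_or_gt k j with hkj | hjk
  · simpa [hN j k hkj] using by positivity
  · rw [abs_div, abs_mul, abs_of_pos (pow_pos hR0 j), abs_of_pos (pow_pos hR0 k),
      div_le_div_iff₀ (pow_pos hR0 _) hR0]
    calc |N j k| * R ^ (j : ℕ) * R = |N j k| * R ^ ((j : ℕ) + 1) := by ring
      _ ≤ α * R ^ (k : ℕ) := by
          gcongr
          exacts [hNα j k, hjk]

end Rescale

section System

variable {d : ℕ} {S : Set ℝ} {α R L a b t W : ℝ} {M : ℝ → Matrix (Fin d) (Fin d) ℝ}
  {x : ℝ → EuclideanSpace ℝ (Fin d)} {T : ℕ → ℝ}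

/-- The linear part of a switched triangular system, seen as one time-dependent matrix on `(0, ∞)`
that is bounded by `α` and may jump at the countably many times in `S`. -/
structure IsTriangularField (S : Set ℝ) (α : ℝ) (M : ℝ → Matrix (Fin d) (Fin d) ℝ) : Prop where
  countable : S.Countable
  bound_nonneg : 0 ≤ α
  abs_apply_le : ∀ t > 0, ∀ j k, |M t j k| ≤ α
  blockTriangular : ∀ t > 0, (M t).BlockTriangular id
  continuousAt : ∀ t > 0, t ∉ S → ContinuousAt M t

/-- A trajectory of the system `M` perturbed by a term of linear growth at most `L`; the
perturbation enters only through the differential inequality it implies off `S`. -/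
structure IsPerturbedSolution (S : Set ℝ) (L : ℝ) (M : ℝ → Matrix (Fin d) (Fin d) ℝ)
    (x : ℝ → EuclideanSpace ℝ (Fin d)) : Prop where
  continuousOn : ContinuousOn x (Ici 0)
  exists_hasDerivAt : ∀ t > 0, t ∉ S →
    ∃ x', HasDerivAt x x' t ∧ ‖x' - mulVecE (M t) (x t)‖ ≤ L * ‖x t‖

/-- The sum over the first `s` windows `[T k, T (k + 1)]` of the largest integral of a diagonal
entry. The Liao-type exponent is the upper limit of `liaoSum M T s / T s`. -/
noncomputable def liaoSum (M : ℝ → Matrix (Fin d) (Fin d) ℝ) (T : ℕ → ℝ) (s : ℕ) : ℝ :=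
  ∑ k ∈ Finset.range s, ⨆ j : Fin d, ∫ t in (T k)..(T (k + 1)), M t j j

/-- The growth rate of a perturbed trajectory in the coordinates `rescale R p`, where `|p j| ≤ c`:
`α` bounds the matrix entries and `L` is the linear growth of the perturbation. -/
noncomputable def rescaledRate (d : ℕ) (α c R L : ℝ) : ℝ :=
  Real.exp (2 * c) * (d * α / R + R ^ d * L)

lemma exists_rescaledRate_le (d : ℕ) (α c : ℝ) {ε : ℝ} (hε : 0 < ε) :
    ∃ R ≥ 1, ∃ L > 0, rescaledRate d α c R L ≤ ε := by
  have hsmall : ∀ᶠ R in atTop, d * α / R < Real.exp (-(2 * c)) * ε / 2 :=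
    (tendsto_const_nhds.div_atTop tendsto_id).eventually_lt_const (by positivity)
  obtain ⟨R, hR, hR1⟩ := (hsmall.and (eventually_ge_atTop 1)).exists
  have hR0 : 0 < R := one_pos.trans_le hR1
  refine ⟨R, hR1, Real.exp (-(2 * c)) * ε / 2 / R ^ d, by positivity, ?_⟩
  rw [rescaledRate, mul_div_cancel₀ _ (pow_pos hR0 d).ne']
  calc Real.exp (2 * c) * (d * α / R + Real.exp (-(2 * c)) * ε / 2)
      ≤ Real.exp (2 * c) * (Real.exp (-(2 * c)) * ε / 2 + Real.exp (-(2 * c)) * ε / 2) := by gcongr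
    _ = ε := by rw [add_halves, ← mul_assoc, ← Real.exp_add, add_neg_cancel, Real.exp_zero, one_mul]

lemma norm_rescale_sub_diagonal_le {A : Matrix (Fin d) (Fin d) ℝ} {p : Fin d → ℝ} {c : ℝ}
    {v y : EuclideanSpace ℝ (Fin d)} (hα : 0 ≤ α) (hR : 1 ≤ R) (hL : 0 ≤ L)
    (hA : A.BlockTriangular id) (hAα : ∀ j k, |A j k| ≤ α) (hp : ∀ j, |p j| ≤ c)
    (hy : ‖y - mulVecE A v‖ ≤ L * ‖v‖) :
    ‖rescale R p (y - mulVecE (Matrix.diagonal A.diag) v)‖ ≤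
      rescaledRate d α c R L * ‖rescale R p v‖ := by
  have hoff : ‖rescale R p (mulVecE (A - Matrix.diagonal A.diag) v)‖ ≤
      d * (Real.exp (2 * c) * (α / R)) * ‖rescale R p v‖ := by
    refine norm_rescale_mulVecE_le hR hα hp (fun j k hkj => ?_) (fun j k => ?_)
    · rcases hkj.eq_or_lt with rfl | hlt
      · simp
      · simp [hA hlt, hlt.ne']
    · rcases eq_or_ne j k with rfl | hne
      · simpa using hα
      · simpa [hne] using hAα j k
  have hpert : ‖rescale R p (y - mulVecE A v)‖ ≤
      Real.exp c * (R ^ d * (L * (Real.exp c * ‖rescale R p v‖))) := by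
    calc ‖rescale R p (y - mulVecE A v)‖
        ≤ Real.exp c * ‖rescale R 0 (y - mulVecE A v)‖ :=
          norm_rescale_le_exp_mul_norm_rescale fun j => by
            simpa using neg_le_iff_add_nonneg.1 (neg_le_of_abs_le (hp j))
      _ ≤ Real.exp c * (R ^ d * ‖y - mulVecE A v‖) := by
          gcongr
          exact norm_rescale_zero_le hR
      _ ≤ Real.exp c * (R ^ d * (L * ‖rescale R 0 v‖)) := by
          gcongr
          exact hy.trans (by gcongr; exact norm_le_norm_rescale_zero hR)
      _ ≤ Real.exp c * (R ^ d * (L * (Real.exp c * ‖rescale R p v‖))) := by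
          gcongr
          exact norm_rescale_le_exp_mul_norm_rescale fun j => by
            simpa using le_of_abs_le (hp j)
  rw [sub_mulVecE_diagonal_eq, rescale_add]
  refine (norm_add_le_of_le hoff hpert).trans_eq ?_
  rw [rescaledRate, two_mul, Real.exp_add]
  ring

namespace IsTriangularField

lemma abs_integral_diag_le (hM : IsTriangularField S α M) (ha : 0 ≤ a) (hab : a ≤ b)
    (j : Fin d) : |∫ r in a..b, M r j j| ≤ α * (b - a) := by
  have hle := intervalIntegral.norm_integral_le_of_norm_le_const (f := fun r => M r j j) (C := α)
    (a := a) (b := b) fun r hr =>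
      hM.abs_apply_le r (ha.trans_lt (by rw [uIoc_of_le hab] at hr; exact hr.1)) j j
  rwa [abs_of_nonneg (sub_nonneg.2 hab)] at hle

lemma continuousOn_integral_diag (hM : IsTriangularField S α M) (ha : 0 ≤ a) (hab : a ≤ b)
    (j : Fin d) : ContinuousOn (fun t => ∫ r in a..t, M r j j) (Icc a b) := by
  rw [← uIcc_of_le hab]
  refine intervalIntegral.continuousOn_primitive_interval'
    (intervalIntegrable_of_continuousAt_off_countable hM.countable (fun t ht htS => ?_)
      (fun t ht => hM.abs_apply_le t (ha.trans_lt ht) j j) hab) left_mem_uIcc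
  exact (continuous_id.matrix_elem j j).continuousAt.comp (hM.continuousAt t (ha.trans_lt ht) htS)

lemma hasDerivAt_integral_diag (hM : IsTriangularField S α M) (ha : 0 ≤ a) (hat : a < t)
    (htS : t ∉ S) (j : Fin d) : HasDerivAt (fun t => ∫ r in a..t, M r j j) (M t j j) t :=
  hasDerivAt_integral_of_continuousAt_off_countable hM.countable
    (fun t ht htS => (continuous_id.matrix_elem j j).continuousAt.comp
      (hM.continuousAt t (ha.trans_lt ht) htS))
    (fun t ht => hM.abs_apply_le t (ha.trans_lt ht) j j) hat htS

end IsTriangularField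

namespace IsPerturbedSolution

lemma norm_rescale_zero_le_exp_mul (hM : IsTriangularField S α M) (hx : IsPerturbedSolution S L M x)
    (hR : 1 ≤ R) (hL : 0 ≤ L) (ha : 0 ≤ a) (hab : a ≤ b) (hW : b - a ≤ W) {s : ℝ}
    (hs : ∀ j, ∫ r in a..b, M r j j ≤ s) :
    ‖rescale R 0 (x b)‖ ≤
      Real.exp (s + rescaledRate d α (α * W) R L * (b - a)) * ‖rescale R 0 (x a)‖ := by
  let p : Fin d → ℝ → ℝ := fun j t => ∫ r in a..t, M r j j
  have hp : ∀ t ∈ Icc a b, ∀ j, |p j t| ≤ α * W := fun t ht j =>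
    (hM.abs_integral_diag_le ha ht.1 j).trans
      (mul_le_mul_of_nonneg_left (by linarith [ht.2]) hM.bound_nonneg)
  have hcont : ContinuousOn (fun t => rescale R (fun j => p j t) (x t)) (Icc a b) := by
    refine (PiLp.continuous_toLp 2 _).comp_continuousOn (continuousOn_pi.2 fun j => ?_)
    exact (continuousOn_const.mul (hM.continuousOn_integral_diag ha hab j).neg.rexp).mul
      ((EuclideanSpace.proj (𝕜 := ℝ) j).continuous.comp_continuousOn
        (hx.continuousOn.mono fun t ht => ha.trans ht.1))
  have hgrowth : ‖rescale R (fun j => p j b) (x b)‖ ≤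
      Real.exp (rescaledRate d α (α * W) R L * (b - a)) * ‖rescale R (fun j => p j a) (x a)‖ := by
    refine norm_le_exp_mul_norm_of_norm_deriv_le_off_countable hM.countable hab hcont
      fun t ht htS => ?_
    have ht0 : 0 < t := ha.trans_lt ht.1
    obtain ⟨x', hx', hle⟩ := hx.exists_hasDerivAt t ht0 htS
    exact ⟨_, hasDerivAt_rescale (fun j => hM.hasDerivAt_integral_diag ha ht.1 htS j) hx',
      norm_rescale_sub_diagonal_le hM.bound_nonneg hR hL (hM.blockTriangular t ht0)
        (hM.abs_apply_le t ht0) (hp t (Ioo_subset_Icc_self ht)) hle⟩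
  have hpa : (fun j => p j a) = 0 := funext fun j => intervalIntegral.integral_same
  rw [hpa] at hgrowth
  calc ‖rescale R 0 (x b)‖ ≤ Real.exp s * ‖rescale R (fun j => p j b) (x b)‖ :=
        norm_rescale_le_exp_mul_norm_rescale fun j => by simpa using hs j
    _ ≤ Real.exp s * (Real.exp (rescaledRate d α (α * W) R L * (b - a)) *
          ‖rescale R 0 (x a)‖) := by gcongr
    _ = _ := by rw [← mul_assoc, ← Real.exp_add]

lemma norm_rescale_zero_le_exp_liaoSum_mul (hM : IsTriangularField S α M)
    (hx : IsPerturbedSolution S L M x) (hR : 1 ≤ R) (hL : 0 ≤ L) (hT : Monotone T) (hT0 : T 0 = 0)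
    (hTW : ∀ k, T (k + 1) - T k ≤ W) (s : ℕ) :
    ‖rescale R 0 (x (T s))‖ ≤
      Real.exp (liaoSum M T s + rescaledRate d α (α * W) R L * T s) * ‖rescale R 0 (x 0)‖ := by
  induction s with
  | zero => simp [liaoSum, hT0]
  | succ s ih =>
    have hTs : 0 ≤ T s := hT0 ▸ hT s.zero_le
    refine (norm_rescale_zero_le_exp_mul hM hx hR hL hTs (hT s.le_succ) (hTW s) fun j =>
      le_ciSup (finite_range fun j : Fin d => ∫ r in (T s)..(T (s + 1)), M r j j).bddAbove
        j).trans ?_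
    refine (mul_le_mul_of_nonneg_left ih (Real.exp_pos _).le).trans_eq ?_
    rw [← mul_assoc, ← Real.exp_add, liaoSum, liaoSum, Finset.sum_range_succ]
    congr 2
    ring

lemma norm_le_exp_mul_norm_zero (hM : IsTriangularField S α M) (hx : IsPerturbedSolution S L M x)
    (hR : 1 ≤ R) (hL : 0 ≤ L) (hT : StrictMono T) (hT0 : T 0 = 0) (hTtop : Tendsto T atTop atTop)
    (hTW : ∀ k, T (k + 1) - T k ≤ W) {γ C : ℝ} (hγ : γ ≤ 0)
    (hsum : ∀ s, liaoSum M T s ≤ γ * T s + C) (ht : 0 < t) :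
    ‖x t‖ ≤ Real.exp (α * W + C - γ * W) * R ^ d * ‖x 0‖ *
      Real.exp ((γ + rescaledRate d α (α * W) R L) * t) := by
  set κ := rescaledRate d α (α * W) R L
  obtain ⟨s, hst, hts⟩ := hT.exists_between_of_tendsto_atTop hTtop (hT0.trans_lt ht)
  have hTs : 0 ≤ T s := hT0 ▸ hT.monotone s.zero_le
  have htW : t - T s ≤ W := by linarith [hTW s]
  have hwindow : ‖rescale R 0 (x t)‖ ≤
      Real.exp (α * W + κ * (t - T s)) * ‖rescale R 0 (x (T s))‖ :=
    norm_rescale_zero_le_exp_mul hM hx hR hL hTs hst.le htW fun j =>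
      (le_of_abs_le (hM.abs_integral_diag_le hTs hst.le j)).trans
        (mul_le_mul_of_nonneg_left htW hM.bound_nonneg)
  have hdrift : γ * T s ≤ γ * (t - W) := mul_le_mul_of_nonpos_left (by linarith) hγ
  have hexp : α * W + liaoSum M T s + κ * t ≤ α * W + C - γ * W + (γ + κ) * t := by
    linarith [hsum s]
  calc ‖x t‖ ≤ ‖rescale R 0 (x t)‖ := norm_le_norm_rescale_zero hR
    _ ≤ Real.exp (α * W + κ * (t - T s)) *
          (Real.exp (liaoSum M T s + κ * T s) * ‖rescale R 0 (x 0)‖) := by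
        refine hwindow.trans ?_
        gcongr
        exact norm_rescale_zero_le_exp_liaoSum_mul hM hx hR hL hT.monotone hT0 hTW s
    _ = Real.exp (α * W + liaoSum M T s + κ * t) * ‖rescale R 0 (x 0)‖ := by
        rw [← mul_assoc, ← Real.exp_add]
        ring_nf
    _ ≤ Real.exp (α * W + C - γ * W + (γ + κ) * t) * (R ^ d * ‖x 0‖) :=
        mul_le_mul (Real.exp_le_exp.2 hexp) (norm_rescale_zero_le hR) (norm_nonneg _)
          (Real.exp_pos _).le
    _ = _ := by
        rw [Real.exp_add]
        ring

lemma exp_neg_mul_norm_zero_le (hM : IsTriangularField S α M) (hx : IsPerturbedSolution S L M x)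
    (ht : 0 ≤ t) : ‖x 0‖ * Real.exp (-(d * α + L) * t) ≤ ‖x t‖ := by
  have hlow := exp_neg_mul_norm_le_norm_of_norm_deriv_le_off_countable (κ := d * α + L)
    hM.countable ht (hx.continuousOn.mono Icc_subset_Ici_self) fun r hr hrS => by
      obtain ⟨x', hx', hle⟩ := hx.exists_hasDerivAt r hr.1 hrS
      refine ⟨x', hx', ?_⟩
      calc ‖x'‖ = ‖mulVecE (M r) (x r) + (x' - mulVecE (M r) (x r))‖ := by rw [add_sub_cancel]
        _ ≤ d * α * ‖x r‖ + L * ‖x r‖ := norm_add_le_of_le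
            (norm_mulVecE_le_of_forall_abs_le hM.bound_nonneg (hM.abs_apply_le r hr.1) _) hle
        _ = (d * α + L) * ‖x r‖ := by ring
  rwa [sub_zero, mul_comm, ← neg_mul] at hlow

end IsPerturbedSolution

lemma IsTriangularField.liaoSum_le (hM : IsTriangularField S α M) (hT : Monotone T)
    (hT0 : T 0 = 0) (s : ℕ) : liaoSum M T s ≤ α * T s := by
  have hTnonneg : ∀ k, 0 ≤ T k := fun k => hT0 ▸ hT k.zero_le
  have hterm : ∀ k, ⨆ j : Fin d, ∫ t in (T k)..(T (k + 1)), M t j j ≤ α * (T (k + 1) - T k) :=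
    fun k => Real.iSup_le
      (fun j => le_of_abs_le (hM.abs_integral_diag_le (hTnonneg k) (hT k.le_succ) j))
      (mul_nonneg hM.bound_nonneg (sub_nonneg.2 (hT k.le_succ)))
  calc liaoSum M T s ≤ ∑ k ∈ Finset.range s, α * (T (k + 1) - T k) :=
        Finset.sum_le_sum fun k _ => hterm k
    _ = α * T s := by rw [← Finset.mul_sum, Finset.sum_range_sub, hT0, sub_zero]

lemma IsTriangularField.exists_liaoSum_le (hM : IsTriangularField S α M) (hT : Monotone T)
    (hT0 : T 0 = 0) (hTtop : Tendsto T atTop atTop) {γ : ℝ}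
    (hγ : limsup (fun s => (T s)⁻¹ * liaoSum M T s) atTop < γ) :
    ∃ C, ∀ s, liaoSum M T s ≤ γ * T s + C := by
  have hbdd : IsBoundedUnder (· ≤ ·) atTop fun s => (T s)⁻¹ * liaoSum M T s := by
    refine isBoundedUnder_of ⟨α, fun s => inv_mul_le_of_le_mul₀ ?_ hM.bound_nonneg ?_⟩
    · exact hT0 ▸ hT s.zero_le
    · exact (hM.liaoSum_le hT hT0 s).trans_eq (mul_comm _ _)
  have hevent : ∀ᶠ s in atTop, liaoSum M T s - γ * T s ≤ 0 := by
    filter_upwards [eventually_lt_of_limsup_lt hγ hbdd, hTtop.eventually_gt_atTop 0] with s hs hs0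
    rw [inv_mul_lt_iff₀ hs0] at hs
    linarith
  obtain ⟨C, hC⟩ := IsBoundedUnder.bddAbove_range (isBoundedUnder_of_eventually_le hevent)
  exact ⟨C, fun s => by linarith [hC (mem_range_self s)]⟩

lemma IsTriangularField.exists_uniform_exponential_bound (hM : IsTriangularField S α M)
    (hT : StrictMono T) (hT0 : T 0 = 0) (hTtop : Tendsto T atTop atTop)
    (hTW : ∀ k, T (k + 1) - T k ≤ W)
    (hχ : limsup (fun s => (T s)⁻¹ * liaoSum M T s) atTop < 0) :
    ∃ δ > 0, ∃ K, ∃ c < 0, ∀ x, IsPerturbedSolution S δ M x →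
      ∀ t > 0, ‖x t‖ ≤ K * ‖x 0‖ * Real.exp (c * t) := by
  obtain ⟨γ, hχγ, hγ⟩ := exists_between hχ
  obtain ⟨C, hC⟩ := hM.exists_liaoSum_le hT.monotone hT0 hTtop hχγ
  obtain ⟨R, hR, δ, hδ, hrate⟩ :=
    exists_rescaledRate_le d α (α * W) (half_pos (neg_pos.2 hγ))
  exact ⟨δ, hδ, Real.exp (α * W + C - γ * W) * R ^ d, γ + rescaledRate d α (α * W) R δ,
    by linarith, fun x hx t ht => hx.norm_le_exp_mul_norm_zero hM hR hδ.le hT hT0 hTtop hTW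
      hγ.le hC ht⟩

end System

section Exponent

variable {N : ℝ → ℝ} {a b c K : ℝ}

lemma eventually_le_exp_of_le_mul_exp {c' : ℝ} (hcc' : c < c')
    (h : ∀ᶠ t in atTop, N t ≤ K * Real.exp (c * t)) :
    ∀ᶠ t in atTop, N t ≤ Real.exp (c' * t) := by
  have hlarge : ∀ᶠ t in atTop, K ≤ Real.exp ((c' - c) * t) :=
    (Real.tendsto_exp_atTop.comp
      (tendsto_id.const_mul_atTop (sub_pos.2 hcc'))).eventually_ge_atTop K
  filter_upwards [h, hlarge] with t ht hK
  calc N t ≤ K * Real.exp (c * t) := ht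
    _ ≤ Real.exp ((c' - c) * t) * Real.exp (c * t) := by gcongr
    _ = Real.exp (c' * t) := by rw [← Real.exp_add]; ring_nf

lemma limsup_log_div_le (ha : 0 < a) (hlow : ∀ᶠ t in atTop, a * Real.exp (b * t) ≤ N t)
    (hup : ∀ᶠ t in atTop, N t ≤ Real.exp (c * t)) :
    limsup (fun t => Real.log (N t) / t) atTop ≤ c := by
  have hbelow : ∀ᶠ t in atTop, -|Real.log a| + b ≤ Real.log (N t) / t := by
    filter_upwards [hlow, eventually_ge_atTop 1] with t ht ht1
    have hlog := Real.log_le_log (by positivity) ht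
    rw [Real.log_mul ha.ne' (Real.exp_pos _).ne', Real.log_exp] at hlog
    rw [le_div_iff₀ (by positivity)]
    nlinarith [neg_abs_le (Real.log a), abs_nonneg (Real.log a)]
  refine limsup_le_of_le (isBoundedUnder_of_eventually_ge hbelow).isCoboundedUnder_le ?_
  filter_upwards [hlow, hup, eventually_gt_atTop 0] with t htlow htup ht
  have hN : 0 < N t := (mul_pos ha (Real.exp_pos _)).trans_le htlow
  rwa [div_le_iff₀ ht, Real.log_le_iff_le_exp hN]

end Exponent

section Switching

variable {d : ℕ} {I : Type*} {A : I → ℝ → Matrix (Fin d) (Fin d) ℝ} {α : ℝ} {τ : ℕ → ℝ}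
  {σ : ℕ → I} {u : ℝ → I}

lemma isTriangularField_switched (hα : 0 ≤ α) (hAcont : ∀ i, ContinuousOn (A i) (Ioi 0))
    (hAnorm : ∀ i, ∀ t > 0, ∀ v : EuclideanSpace ℝ (Fin d), ‖mulVecE (A i t) v‖ ≤ α * ‖v‖)
    (hAtri : ∀ i, ∀ t > 0, (A i t).BlockTriangular id) (hτ0 : τ 0 = 0) (hτ : StrictMono τ)
    (hτtop : Tendsto τ atTop atTop)
    (hu : ∀ n, ∀ t ∈ Ioc (τ n) (τ (n + 1)), u t = σ (n + 1)) :
    IsTriangularField (range τ) α fun t => A (u t) t where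
  countable := countable_range τ
  bound_nonneg := hα
  abs_apply_le t ht := abs_apply_le_of_norm_mulVecE_le (hAnorm _ t ht)
  blockTriangular t ht := hAtri _ t ht
  continuousAt t ht htτ := by
    obtain ⟨n, hn⟩ := hτ.exists_between_of_tendsto_atTop hτtop (hτ0.trans_lt ht)
    have htn : t < τ (n + 1) := hn.2.lt_of_ne fun h => htτ ⟨n + 1, h.symm⟩
    refine ((hAcont (σ (n + 1))).continuousAt (Ioi_mem_nhds ht)).congr ?_
    filter_upwards [Ioo_mem_nhds hn.1 htn] with r hr
    rw [hu n r (Ioo_subset_Ioc_self hr)]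

lemma isPerturbedSolution_switched
    {F : I → ℝ → EuclideanSpace ℝ (Fin d) → EuclideanSpace ℝ (Fin d)} {L δ : ℝ}
    {x : ℝ → EuclideanSpace ℝ (Fin d)} (hLδ : L ≤ δ)
    (hF : ∀ i, ∀ t > 0, ∀ v, ‖F i t v‖ ≤ L * ‖v‖) (hxc : ContinuousOn x (Ici 0))
    (hxd : ∀ t > 0, (∀ n, t ≠ τ n) →
      HasDerivAt x (mulVecE (A (u t) t) (x t) + F (u t) t (x t)) t) :
    IsPerturbedSolution (range τ) δ (fun t => A (u t) t) x where
  continuousOn := hxc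
  exists_hasDerivAt t ht htτ := by
    refine ⟨_, hxd t ht fun n hn => htτ ⟨n, hn.symm⟩, ?_⟩
    rw [add_sub_cancel_left]
    exact (hF _ t ht _).trans (by gcongr)

lemma sub_le_mul_of_forall_succ_sub_le {f : ℕ → ℝ} {C : ℝ} (hf : ∀ n, f (n + 1) - f n ≤ C)
    {m n D : ℕ} (hC : 0 ≤ C) (hmn : m ≤ n) (hD : n - m ≤ D) : f n - f m ≤ D * C := by
  calc f n - f m = ∑ k ∈ Finset.Ico m n, (f (k + 1) - f k) := (Finset.sum_Ico_sub f hmn).symm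
    _ ≤ (n - m : ℕ) * C := by
        simpa using Finset.sum_le_card_nsmul (Finset.Ico m n) _ C fun k _ => hf k
    _ ≤ D * C := by gcongr

end Switching

theorem stmt1_general {d : ℕ} {S : Set ℝ} {α W : ℝ} {M : ℝ → Matrix (Fin d) (Fin d) ℝ}
    {T : ℕ → ℝ} (hM : IsTriangularField S α M) (hT : StrictMono T) (hT0 : T 0 = 0)
    (hTtop : Tendsto T atTop atTop) (hTW : ∀ k, T (k + 1) - T k ≤ W)
    (hχ : limsup (fun s => (T s)⁻¹ * liaoSum M T s) atTop < 0) :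
    ∃ δ > 0, ∀ x, IsPerturbedSolution S δ M x →
      (x 0 ≠ 0 → limsup (fun t => Real.log ‖x t‖ / t) atTop < 0) ∧
        ∃ c < 0, ∀ᶠ t in atTop, ‖x t‖ ≤ Real.exp (c * t) := by
  obtain ⟨δ, hδ, K, c, hc, hbound⟩ := hM.exists_uniform_exponential_bound hT hT0 hTtop hTW hχ
  refine ⟨δ, hδ, fun x hx => ?_⟩
  have hup : ∀ᶠ t in atTop, ‖x t‖ ≤ Real.exp (c / 2 * t) :=
    eventually_le_exp_of_le_mul_exp (by linarith)
      ((eventually_gt_atTop 0).mono (hbound x hx))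
  refine ⟨fun hx0 => ?_, c / 2, by linarith, hup⟩
  have hlow := (eventually_ge_atTop 0).mono fun t ht => hx.exp_neg_mul_norm_zero_le hM ht
  exact (limsup_log_div_le (norm_pos_iff.2 hx0) hlow hup).trans_lt (by linarith)

end

/-- upper-triangular case of the stability theorem.  If the Liao-type
exponent of the linear switched system is negative, there is `δ > 0` such that every
perturbation of linear growth with constant `L < δ` yields a globally asymptotically
exponentially stable quasi-linear switched system (negative upper Lyapunov exponent
for every solution). -/
theorem stmt1
    {d : ℕ} (hd : 2 ≤ d) {I : Type*}
    (A : I → ℝ → Matrix (Fin d) (Fin d) ℝ)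
    (α Tstar : ℝ) (hα : 0 < α) (hT : 0 < Tstar)
    (hAcont : ∀ i, ContinuousOn (A i) (Set.Ioi (0:ℝ)))
    (hAnorm : ∀ i, ∀ t > (0:ℝ), ∀ v : EuclideanSpace ℝ (Fin d),
      ‖mulVecE (A i t) v‖ ≤ α * ‖v‖)
    (hAtri : ∀ i, ∀ t > (0:ℝ), (A i t).BlockTriangular (id : Fin d → Fin d))
    (τ : ℕ → ℝ) (hτ0 : τ 0 = 0) (hτmono : StrictMono τ)
    (hτtop : Filter.Tendsto τ Filter.atTop Filter.atTop)
    (hτgap : ∀ n : ℕ, τ (n+1) - τ n ≤ Tstar)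
    (σ : ℕ → I) (u : ℝ → I)
    (hu : ∀ n : ℕ, ∀ t ∈ Set.Ioc (τ n) (τ (n+1)), u t = σ (n+1))
    (Δ : ℕ) (hΔ : 0 < Δ)
    (nseq : ℕ → ℕ) (hn0 : nseq 0 = 0) (hnmono : StrictMono nseq)
    (hngap : ∀ s : ℕ, nseq (s+1) - nseq s ≤ Δ)
    (χ : ℝ)
    (hχ : χ = Filter.limsup (fun s : ℕ =>
        (τ (nseq s))⁻¹ * ∑ k ∈ Finset.range s, ⨆ j : Fin d,
          ∫ t in (τ (nseq k))..(τ (nseq (k+1))), A (u t) t j j) Filter.atTop)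
    (hχneg : χ < 0) :
    ∃ δ > (0:ℝ),
      ∀ (F : I → ℝ → EuclideanSpace ℝ (Fin d) → EuclideanSpace ℝ (Fin d)),
        (∀ i, ContinuousOn (Function.uncurry (F i))
          ((Set.Ioi (0:ℝ)) ×ˢ (Set.univ : Set (EuclideanSpace ℝ (Fin d))))) →
        ∀ L : ℝ, 0 ≤ L → L < δ →
        (∀ i, ∀ t > (0:ℝ), ∀ v : EuclideanSpace ℝ (Fin d), ‖F i t v‖ ≤ L * ‖v‖) →
        ∀ (x : ℝ → EuclideanSpace ℝ (Fin d)) (x₀ : EuclideanSpace ℝ (Fin d)),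
          x 0 = x₀ →
          ContinuousOn x (Set.Ici (0:ℝ)) →
          (∀ t > (0:ℝ), (∀ n : ℕ, t ≠ τ n) →
            HasDerivAt x (mulVecE (A (u t) t) (x t) + F (u t) t (x t)) t) →
          (x₀ ≠ 0 → Filter.limsup (fun t : ℝ => Real.log ‖x t‖ / t) Filter.atTop < 0)
          ∧ ∃ c < (0:ℝ), ∀ᶠ t : ℝ in Filter.atTop, ‖x t‖ ≤ Real.exp (c * t) := by
  obtain ⟨δ, hδ, hstable⟩ := stmt1_general
    (isTriangularField_switched hα.le hAcont hAnorm hAtri hτ0 hτmono hτtop hu)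
    (hτmono.comp hnmono) (by simp [hn0, hτ0]) (hτtop.comp hnmono.tendsto_atTop)
    (fun k => sub_le_mul_of_forall_succ_sub_le hτgap hT.le (hnmono k.lt_succ_self).le (hngap k))
    (hχ ▸ hχneg)
  exact ⟨δ, hδ, fun F _ L _ hLδ hF x x₀ hx0 hxc hxd =>
    hx0 ▸ hstable x (isPerturbedSolution_switched hLδ.le hF hxc hxd)⟩
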